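/- Let z₁ < ⋯ < z_K (K ≥ 2) be a grid with Cramér projection Π_C, let η_C be the unique fixed point of Π_C T^π, and let η_π be a return distribution function satisfying the distributional Bellman equation T^π η_π = η_π. If η_π^{(x,a)} is supported on [z₁, z_K] for all (x,a) ∈ X×A, then ℓ̄₂²(η_C, η_π) ≤ (1/(1−γ)) · max_{1 ≤ i < K} (z_{i+1} − z_i). -/

import Mathlib

open MeasureTheory Filter Set

noncomputable section

/-- The cumulative distribution function of a measure on ℝ. -/
def cdfFn (ν : Measure ℝ) (y : ℝ) : ℝ := (ν (Set.Iic y)).toReal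

/-- The Cramér distance `ℓ₂` between two measures on ℝ. -/
def cramerDist (ν₁ ν₂ : Measure ℝ) : ℝ :=
  Real.sqrt (∫ x, (cdfFn ν₁ x - cdfFn ν₂ x) ^ 2)

/-- The hat functions associated with the grid `z 0 < z 1 < ⋯ < z (K-1)`. -/
def hatFn (K : ℕ) (z : ℕ → ℝ) (i : ℕ) (x : ℝ) : ℝ :=
  if i = 0 ∧ x ≤ z 0 then 1
  else if i = K - 1 ∧ z (K - 1) ≤ x then 1
  else if i + 1 < K ∧ z i ≤ x ∧ x ≤ z (i + 1) then (z (i + 1) - x) / (z (i + 1) - z i)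
  else if 0 < i ∧ z (i - 1) ≤ x ∧ x ≤ z i then (x - z (i - 1)) / (z i - z (i - 1))
  else 0

/-- The Cramér projection onto the grid `z 0 < z 1 < ⋯ < z (K-1)`. -/
def cramerProj (K : ℕ) (z : ℕ → ℝ) (ν : Measure ℝ) : Measure ℝ :=
  ∑ i ∈ Finset.range K, (ENNReal.ofReal (∫ w, hatFn K z i w ∂ν)) • Measure.dirac (z i)

/-- The distributional Bellman operator. -/
def bellmanOp {X A : Type} [Fintype X] [Fintype A] [MeasurableSpace X] [MeasurableSpace A]
    (γ : ℝ) (p : X × A → Measure (ℝ × X)) (pol : X → Measure A)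
    (η : X × A → Measure ℝ) (xa : X × A) : Measure ℝ :=
  (p xa).bind (fun rx' => ∑ a' : A, (pol rx'.2 {a'}) • (η (rx'.2, a')).map (fun t => rx'.1 + γ * t))

/-- The supremum-Cramér metric between return distribution functions. -/
def supCramer {X A : Type} [Fintype X] [Fintype A] (η μ : X × A → Measure ℝ) : ℝ :=
  ⨆ xa : X × A, cramerDist (η xa) (μ xa)

/-- Square-integrable tails of the CDF. -/
def sqIntTails (ν : Measure ℝ) : Prop :=
  IntegrableOn (fun x => (cdfFn ν x) ^ 2) (Set.Iic 0) ∧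
  IntegrableOn (fun x => (1 - cdfFn ν x) ^ 2) (Set.Ici 0)

lemma cdfFn_mono (ν : Measure ℝ) [IsProbabilityMeasure ν] : Monotone (cdfFn ν) := by
  intro a b h
  exact ENNReal.toReal_mono (measure_ne_top _ _) (measure_mono (Set.Iic_subset_Iic.2 h))

lemma cdfFn_nonneg (ν : Measure ℝ) (y : ℝ) : 0 ≤ cdfFn ν y := ENNReal.toReal_nonneg

lemma cdfFn_le_one (ν : Measure ℝ) [IsProbabilityMeasure ν] (y : ℝ) : cdfFn ν y ≤ 1 := by
  have := ENNReal.toReal_mono ENNReal.one_ne_top (prob_le_one (μ := ν) (s := Set.Iic y))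
  simpa [cdfFn] using this

/-- partial sums of hat functions -/
def psum (z : ℕ → ℝ) (i : ℕ) (w : ℝ) : ℝ :=
  if w ≤ z i then 1 else if w ≤ z (i+1) then (z (i+1) - w) / (z (i+1) - z i) else 0

lemma sum_hat (K : ℕ) (z : ℕ → ℝ) (hz : ∀ i, i + 1 < K → z i < z (i + 1)) (w : ℝ) :
    ∀ i, i + 1 < K → ∑ j ∈ Finset.range (i+1), hatFn K z j w = psum z i w := by
  intro i
  induction i with
  | zero =>
    intro h
    have h0 := hz 0 h
    rw [Finset.sum_range_succ, Finset.sum_range_zero, zero_add]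
    have e : ¬ (0 = K - 1) := by omega
    have e' : 0 + 1 < K := h
    unfold hatFn psum
    by_cases a1 : w ≤ z 0
    · simp [a1]
    · have a2 : z 0 ≤ w := (not_le.1 a1).le
      by_cases a3 : w ≤ z (0+1) <;> simp only [a1, a2, a3, e, e', true_and, false_and, and_false, if_false, if_true, lt_irrefl]
  | succ i ih =>
    intro h
    rw [Finset.sum_range_succ, ih (by omega)]
    have h0 := hz i (by omega)
    have h1 := hz (i+1) h
    have hd : z (i+1) - z i ≠ 0 := by linarith
    have hd1 : z (i+1+1) - z (i+1) ≠ 0 := by linarith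
    have e1 : ¬ (i+1 = 0) := by omega
    have e2 : ¬ (i+1 = K-1) := by omega
    have e3 : 0 < i + 1 := by omega
    simp only [hatFn, psum, e1, e2, e3, h, true_and, false_and, if_false, Nat.add_sub_cancel]
    rcases lt_trichotomy w (z (i+1)) with hw | hw | hw
    · have a1 : ¬ (z (i+1) ≤ w) := by linarith
      have a2 : w ≤ z (i+1) := hw.le
      simp only [a1, a2, false_and, if_false, if_true, and_true]
      split_ifs with b1 b2 b2
      · have : w = z i := le_antisymm b1 b2
        subst this; simp
      · simp
      · field_simp; ring
      · exfalso; linarith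
    · subst hw
      have : ¬ (z (i+1) ≤ z i) := by linarith
      simp [this, h1.le, div_self hd1]
    · have a1 : z (i+1) ≤ w := hw.le
      have a2 : ¬ (w ≤ z (i+1)) := by linarith
      have a3 : ¬ (w ≤ z i) := by linarith
      simp [a1, a2, a3]

lemma hat_meas (K : ℕ) (z : ℕ → ℝ) (i : ℕ) : Measurable (hatFn K z i) := by
  unfold hatFn
  refine Measurable.ite ?_ (by fun_prop) (Measurable.ite ?_ (by fun_prop) (Measurable.ite ?_ (by fun_prop) (Measurable.ite ?_ (by fun_prop) (by fun_prop))))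
  · exact (MeasurableSet.const _).inter measurableSet_Iic
  · exact (MeasurableSet.const _).inter measurableSet_Ici
  · exact (MeasurableSet.const _).inter (measurableSet_Ici.inter measurableSet_Iic)
  · exact (MeasurableSet.const _).inter (measurableSet_Ici.inter measurableSet_Iic)

lemma hat_nonneg (K : ℕ) (z : ℕ → ℝ) (hz : ∀ i, i + 1 < K → z i < z (i + 1)) (i : ℕ) (hi : i < K)
    (w : ℝ) : 0 ≤ hatFn K z i w := by
  unfold hatFn
  split_ifs with a b c d
  · norm_num
  · norm_num
  · exact div_nonneg (by linarith) (by linarith [hz i c.1])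
  · exact div_nonneg (by linarith) (by linarith)
  · exact le_rfl

lemma hat_le_one (K : ℕ) (z : ℕ → ℝ) (i : ℕ) (w : ℝ) : hatFn K z i w ≤ 1 := by
  unfold hatFn
  split_ifs with a b c d
  · norm_num
  · norm_num
  · exact div_le_one_of_le₀ (by linarith) (by linarith)
  · exact div_le_one_of_le₀ (by linarith) (by linarith)
  · norm_num

lemma hat_int (K : ℕ) (z : ℕ → ℝ) (hz : ∀ i, i + 1 < K → z i < z (i + 1)) (i : ℕ) (hi : i < K)
    (ν : Measure ℝ) [IsProbabilityMeasure ν] : Integrable (hatFn K z i) ν := by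
  refine Integrable.of_bound (hat_meas K z i).aestronglyMeasurable 1 (ae_of_all _ fun w => ?_)
  rw [Real.norm_eq_abs, abs_of_nonneg (hat_nonneg K z hz i hi w)]
  exact hat_le_one K z i w

lemma grid_mono (K : ℕ) (z : ℕ → ℝ) (hz : ∀ i, i + 1 < K → z i < z (i + 1)) :
    ∀ i j, i ≤ j → j < K → z i ≤ z j := by
  intro i j hij
  induction j, hij using Nat.le_induction with
  | base => intro _; exact le_rfl
  | succ j _ ih => intro h; exact (ih (by omega)).trans (hz j h).le

lemma psum_integral (z : ℕ → ℝ) (i : ℕ) (h : z i < z (i+1)) (ν : Measure ℝ)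
    [IsProbabilityMeasure ν] :
    (z (i+1) - z i) * ∫ w, psum z i w ∂ν = ∫ x in (z i)..(z (i+1)), cdfFn ν x := by
  have hS : MeasurableSet {q : ℝ × ℝ | q.2 ≤ q.1} := measurableSet_le measurable_snd measurable_fst
  have h1 := Measure.prod_apply (μ := volume.restrict (Set.Ioc (z i) (z (i+1)))) (ν := ν) hS
  have h2 := Measure.prod_apply_symm (μ := volume.restrict (Set.Ioc (z i) (z (i+1)))) (ν := ν) hS
  rw [h1] at h2
  have e1 : ∀ x : ℝ, Prod.mk x ⁻¹' {q : ℝ × ℝ | q.2 ≤ q.1} = Set.Iic x := by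
    intro x; ext; simp
  have e2 : ∀ w : ℝ, (volume.restrict (Set.Ioc (z i) (z (i+1)))) ((fun x => (x, w)) ⁻¹' {q : ℝ × ℝ | q.2 ≤ q.1}) = ENNReal.ofReal ((z (i+1) - z i) * psum z i w) := by
    intro w
    have : ((fun x => (x, w)) ⁻¹' {q : ℝ × ℝ | q.2 ≤ q.1}) = Set.Ici w := by ext; simp
    rw [this, Measure.restrict_apply measurableSet_Ici]
    have hd : z (i+1) - z i ≠ 0 := by linarith
    unfold psum
    split_ifs with a b
    · have : Set.Ici w ∩ Set.Ioc (z i) (z (i+1)) = Set.Ioc (z i) (z (i+1)) := by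
        ext x; simp only [Set.mem_inter_iff, Set.mem_Ici, Set.mem_Ioc]; grind
      rw [this, Real.volume_Ioc, mul_one]
    · have : Set.Ici w ∩ Set.Ioc (z i) (z (i+1)) = Set.Icc w (z (i+1)) := by
        ext x; simp only [Set.mem_inter_iff, Set.mem_Ici, Set.mem_Ioc, Set.mem_Icc]; grind
      rw [this, Real.volume_Icc]; congr 1; field_simp
    · have : Set.Ici w ∩ Set.Ioc (z i) (z (i+1)) = ∅ := by
        ext x; simp only [Set.mem_inter_iff, Set.mem_Ici, Set.mem_Ioc, Set.mem_empty_iff_false]; grind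
      rw [this]; simp
  simp only [e1, e2] at h2
  have hn : ∀ w, 0 ≤ (z (i+1) - z i) * psum z i w := by
    intro w
    apply mul_nonneg (by linarith)
    unfold psum
    split_ifs
    · norm_num
    · exact div_nonneg (by linarith) (by linarith)
    · norm_num
  have hm : Measurable (psum z i) := by
    unfold psum
    exact Measurable.ite measurableSet_Iic (by fun_prop) (Measurable.ite measurableSet_Iic (by fun_prop) (by fun_prop))
  rw [← integral_const_mul, integral_eq_lintegral_of_nonneg_ae (ae_of_all _ hn) (hm.const_mul _).aestronglyMeasurable,
    ← h2, intervalIntegral.integral_of_le h.le,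
    integral_eq_lintegral_of_nonneg_ae (ae_of_all _ (cdfFn_nonneg ν)) (cdfFn_mono ν).measurable.aestronglyMeasurable]
  congr 1
  apply lintegral_congr
  intro x
  simp [cdfFn, ENNReal.ofReal_toReal (measure_ne_top ν _)]

lemma cdf_proj (K : ℕ) (z : ℕ → ℝ) (hz : ∀ i, i + 1 < K → z i < z (i + 1))
    (ν : Measure ℝ) [IsProbabilityMeasure ν] (i : ℕ) (hi : i + 1 < K) (x : ℝ)
    (h1 : z i ≤ x) (h2 : x < z (i+1)) :
    (z (i+1) - z i) * cdfFn (cramerProj K z ν) x = ∫ x in (z i)..(z (i+1)), cdfFn ν x := by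
  rw [← psum_integral z i (hz i hi) ν]
  congr 1
  have hcongr : ∀ w, psum z i w = ∑ j ∈ Finset.range (i+1), hatFn K z j w :=
    fun w => (sum_hat K z hz w i hi).symm
  simp only [hcongr]
  rw [integral_finsetSum _ (fun j hj => hat_int K z hz j (by simp at hj; omega) ν)]
  unfold cdfFn cramerProj
  simp only [Measure.finsetSum_apply, Measure.smul_apply, Measure.dirac_apply' _ measurableSet_Iic, smul_eq_mul]
  rw [ENNReal.toReal_sum (by
    intro j _
    apply ENNReal.mul_ne_top ENNReal.ofReal_ne_top
    by_cases h : z j ∈ Set.Iic x <;> simp [h])]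
  rw [← Finset.sum_subset (Finset.range_mono (show i+1 ≤ K by omega))]
  · apply Finset.sum_congr rfl
    intro j hj
    simp at hj
    have : z j ∈ Set.Iic x := (grid_mono K z hz j i (by omega) (by omega)).trans h1
    have h0 : 0 ≤ ∫ w, hatFn K z j w ∂ν := integral_nonneg (fun w => hat_nonneg K z hz j (by omega) w)
    simp [this, h0]
  · intro j hj hj'
    simp at hj hj'
    have : z j ∉ Set.Iic x := by
      have := grid_mono K z hz (i+1) j (by omega) hj
      simp; linarith
    simp [this]

/-- per-cell estimate -/
lemma cell_bound (a b : ℝ) (hab : a < b) (F G : ℝ → ℝ) (hF : Monotone F) (hG : Monotone G) (A : ℝ)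
    (hA : (b - a) * A = ∫ x in a..b, G x) :
    ∫ x in a..b, (A - F x)^2 ≤ (∫ x in a..b, (G x - F x)^2) + (b - a) * (F b - F a)^2 := by
  have bd : ∀ {H : ℝ → ℝ}, Monotone H → ∀ x ∈ Set.Icc a b, |H x| ≤ |H a| + |H b| := by
    intro H hH x hx
    have := hH hx.1
    have := hH hx.2
    rw [abs_le]; constructor <;> grind
  have ii : ∀ (φ : ℝ → ℝ) (C : ℝ), Measurable φ → (∀ x ∈ Set.Icc a b, |φ x| ≤ C) → IntervalIntegrable φ volume a b := by
    intro φ C h1 h2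
    rw [intervalIntegrable_iff_integrableOn_Ioc_of_le hab.le]
    refine Measure.integrableOn_of_bounded (M := C) (by simp) h1.aestronglyMeasurable ?_
    refine (ae_restrict_mem measurableSet_Ioc).mono fun x hx => h2 x (Set.Ioc_subset_Icc_self hx)
  have mF := hF.measurable
  have mG := hG.measurable
  have iF : IntervalIntegrable F volume a b := hF.intervalIntegrable
  have iG : IntervalIntegrable G volume a b := hG.intervalIntegrable
  have sqb : ∀ {H : ℝ → ℝ} {C : ℝ}, (∀ x ∈ Set.Icc a b, |H x| ≤ C) → ∀ x ∈ Set.Icc a b, |(H x)^2| ≤ C^2 := by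
    intro H C h x hx
    rw [abs_pow]
    exact pow_le_pow_left₀ (abs_nonneg _) (h x hx) 2
  have iF2 : IntervalIntegrable (fun x => F x ^ 2) volume a b := ii _ _ (mF.pow_const 2) (sqb (bd hF))
  have iD2 : IntervalIntegrable (fun x => (G x - F x) ^ 2) volume a b := by
    refine ii _ ((|G a| + |G b| + (|F a| + |F b|))^2) ((mG.sub mF).pow_const 2) (sqb ?_)
    intro x hx
    exact (abs_sub _ _).trans (add_le_add (bd hG x hx) (bd hF x hx))
  -- expansion
  have ex : ∀ c : ℝ, ∫ x in a..b, (c - F x)^2 = (b - a) * c^2 - 2 * c * (∫ x in a..b, F x) + ∫ x in a..b, F x ^ 2 := by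
    intro c
    have : ∀ x, (c - F x)^2 = (c^2 - (2*c) * F x) + F x ^ 2 := by intro x; ring
    simp only [this]
    rw [intervalIntegral.integral_add (by simpa using (intervalIntegrable_const).sub (iF.const_mul (2*c))) iF2,
      intervalIntegral.integral_sub (intervalIntegrable_const) (iF.const_mul (2*c)), intervalIntegral.integral_const_mul]
    simp
  -- Cauchy-Schwarz
  have hd : 0 < b - a := by linarith
  set M := (∫ x in a..b, F x) / (b - a) with hM
  have hM' : ∫ x in a..b, F x = (b - a) * M := by rw [hM]; field_simp
  have cs : (b - a) * (A - M)^2 ≤ ∫ x in a..b, (G x - F x)^2 := by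
    have h0 : 0 ≤ ∫ x in a..b, ((G x - F x) - (A - M))^2 := intervalIntegral.integral_nonneg hab.le (fun x _ => sq_nonneg _)
    have : ∀ x, ((G x - F x) - (A - M))^2 = ((G x - F x)^2 - (2*(A-M)) * (G x - F x)) + (A-M)^2 := by intro x; ring
    simp only [this] at h0
    rw [intervalIntegral.integral_add (by simpa using iD2.sub ((iG.sub iF).const_mul (2*(A-M)))) intervalIntegrable_const,
      intervalIntegral.integral_sub iD2 (by simpa using (iG.sub iF).const_mul (2*(A-M))), intervalIntegral.integral_const_mul,
      intervalIntegral.integral_sub iG iF, ← hA, hM'] at h0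
    simp at h0
    nlinarith
  have mb1 : F a ≤ M := by
    rw [hM, le_div_iff₀ hd]
    have := intervalIntegral.integral_mono_on hab.le (intervalIntegrable_const (c := F a)) iF (fun x hx => hF hx.1)
    simp at this; linarith
  have mb2 : M ≤ F b := by
    rw [hM, div_le_iff₀ hd]
    have := intervalIntegral.integral_mono_on hab.le iF (intervalIntegrable_const (c := F b)) (fun x hx => hF hx.2)
    simp at this; linarith
  have osc : ∫ x in a..b, (M - F x)^2 ≤ (b - a) * (F b - F a)^2 := by
    have := intervalIntegral.integral_mono_on (f := fun x => (M - F x)^2) (g := fun _ => (F b - F a)^2) (μ := volume) hab.le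
      (by
        refine ii _ ((|M| + (|F a| + |F b|))^2) ((measurable_const.sub mF).pow_const 2) (sqb ?_)
        intro x hx
        exact (abs_sub _ _).trans (add_le_add le_rfl (bd hF x hx)))
      intervalIntegrable_const (fun x hx => by
        have := hF hx.1
        have := hF hx.2
        apply sq_le_sq'  <;> linarith)
    simpa using this
  rw [ex, hM'] at osc
  rw [ex, hM']
  nlinarith
open ProbabilityTheory in
lemma exists_markov {Ω : Type} [MeasurableSpace Ω] (p : Measure Ω) (f : Ω → Measure ℝ)
    (hf : AEMeasurable f p) (hprob : ∀ᵐ ω ∂p, f ω Set.univ = 1) :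
    ∃ κ : Kernel Ω ℝ, IsMarkovKernel κ ∧ ∀ᵐ ω ∂p, f ω = κ ω := by
  classical
  let g := hf.mk f
  have hg : Measurable g := hf.measurable_mk
  have hs : MeasurableSet {ω | g ω Set.univ = 1} :=
    (Measure.measurable_coe MeasurableSet.univ).comp hg (measurableSet_singleton 1)
  refine ⟨⟨fun ω => if g ω Set.univ = 1 then g ω else Measure.dirac 0, Measurable.ite hs hg measurable_const⟩, ⟨fun ω => ?_⟩, ?_⟩
  · change IsProbabilityMeasure (if g ω Set.univ = 1 then g ω else Measure.dirac 0)
    split_ifs with h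
    · exact ⟨h⟩
    · infer_instance
  · filter_upwards [hf.ae_eq_mk, hprob] with ω h1 h2
    change f ω = (if g ω Set.univ = 1 then g ω else Measure.dirac 0)
    have h1' : f ω = g ω := h1
    rw [← h1', if_pos h2]

open ProbabilityTheory in
lemma cdf_kernel_meas {Ω : Type} [MeasurableSpace Ω] (κ : Kernel Ω ℝ) [IsMarkovKernel κ] :
    Measurable (fun q : ℝ × Ω => cdfFn (κ q.2) q.1) := by
  have hS : MeasurableSet {q : (ℝ × Ω) × ℝ | q.2 ≤ q.1.1} :=
    measurableSet_le measurable_snd (measurable_fst.comp measurable_fst)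
  have := Kernel.measurable_kernel_prodMk_left (κ := κ.comap (Prod.snd : ℝ × Ω → Ω) measurable_snd) hS
  exact this.ennreal_toReal

lemma sq_integral_le' {Ω : Type} [MeasurableSpace Ω] (p : Measure Ω) [IsProbabilityMeasure p]
    (u : Ω → ℝ) (hu : Measurable u) (hb : ∀ ω, |u ω| ≤ 1) : (∫ ω, u ω ∂p)^2 ≤ ∫ ω, (u ω)^2 ∂p := by
  have i1 : Integrable u p := Integrable.of_bound hu.aestronglyMeasurable 1 (ae_of_all _ hb)
  have i2 : Integrable (fun ω => u ω ^2) p := Integrable.of_bound (hu.pow_const 2).aestronglyMeasurable 1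
    (ae_of_all _ fun ω => by
      rw [Real.norm_eq_abs, abs_pow]; exact pow_le_one₀ (abs_nonneg _) (hb ω))
  set c := ∫ ω, u ω ∂p with hc
  have h0 : 0 ≤ ∫ ω, (u ω - c)^2 ∂p := integral_nonneg (fun _ => sq_nonneg _)
  have : ∀ ω, (u ω - c)^2 = (u ω ^2 - (2*c) * u ω) + c^2 := by intro x; ring
  simp only [this] at h0
  have i3 : Integrable (fun ω => u ω ^2 - (2*c) * u ω) p := i2.sub (i1.const_mul _)
  rw [integral_add i3 (integrable_const _), integral_sub i2 (i1.const_mul _),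
    integral_const_mul, ← hc] at h0
  simp at h0
  nlinarith

lemma cdf_sub_abs (μ ν : Measure ℝ) [IsProbabilityMeasure μ] [IsProbabilityMeasure ν] (y : ℝ) :
    |cdfFn μ y - cdfFn ν y| ≤ 1 := by
  rw [abs_le]
  constructor <;> linarith [cdfFn_nonneg μ y, cdfFn_nonneg ν y, cdfFn_le_one μ y, cdfFn_le_one ν y]

open ProbabilityTheory in
lemma contraction {Ω : Type} [MeasurableSpace Ω] (p : Measure Ω) [IsProbabilityMeasure p]
    (f₁ f₂ : Ω → Measure ℝ) (hf₁ : AEMeasurable f₁ p) (hf₂ : AEMeasurable f₂ p)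
    (h₁ : ∀ᵐ ω ∂p, f₁ ω Set.univ = 1) (h₂ : ∀ᵐ ω ∂p, f₂ ω Set.univ = 1) (B : ENNReal)
    (hB : ∀ᵐ ω ∂p, ∫⁻ y, ENNReal.ofReal ((cdfFn (f₁ ω) y - cdfFn (f₂ ω) y)^2) ≤ B) :
    ∫⁻ y, ENNReal.ofReal ((cdfFn (p.bind f₁) y - cdfFn (p.bind f₂) y)^2) ≤ B := by
  obtain ⟨κ₁, hκ₁, e₁⟩ := exists_markov p f₁ hf₁ h₁
  obtain ⟨κ₂, hκ₂, e₂⟩ := exists_markov p f₂ hf₂ h₂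
  rw [Measure.bind_congr_right e₁, Measure.bind_congr_right e₂]
  have cdfb : ∀ (κ : Kernel Ω ℝ) [IsMarkovKernel κ] (y : ℝ), cdfFn (p.bind κ) y = ∫ ω, cdfFn (κ ω) y ∂p := by
    intro κ _ y
    rw [cdfFn, Measure.bind_apply measurableSet_Iic κ.measurable.aemeasurable]
    unfold cdfFn
    rw [integral_toReal ((κ.measurable_coe measurableSet_Iic).aemeasurable) (ae_of_all _ fun ω => measure_lt_top _ _)]
  have mu : Measurable (fun q : ℝ × Ω => cdfFn (κ₁ q.2) q.1 - cdfFn (κ₂ q.2) q.1) :=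
    (cdf_kernel_meas κ₁).sub (cdf_kernel_meas κ₂)
  have my : ∀ (κ : Kernel Ω ℝ) [IsMarkovKernel κ] (y : ℝ), Measurable (fun ω => cdfFn (κ ω) y) := by
    intro κ _ y
    exact (cdf_kernel_meas κ).comp (measurable_const.prodMk measurable_id)
  have iy : ∀ (κ : Kernel Ω ℝ) [IsMarkovKernel κ] (y : ℝ), Integrable (fun ω => cdfFn (κ ω) y) p := by
    intro κ _ y
    refine Integrable.of_bound (my κ y).aestronglyMeasurable 1 (ae_of_all _ fun ω => ?_)
    rw [Real.norm_eq_abs, abs_of_nonneg (cdfFn_nonneg _ _)]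
    exact cdfFn_le_one _ _
  calc _ ≤ ∫⁻ y, ∫⁻ ω, ENNReal.ofReal ((cdfFn (κ₁ ω) y - cdfFn (κ₂ ω) y)^2) ∂p := by
        apply lintegral_mono
        intro y
        have i2 : Integrable (fun ω => (cdfFn (κ₁ ω) y - cdfFn (κ₂ ω) y)^2) p :=
          Integrable.of_bound (((my κ₁ y).sub (my κ₂ y)).pow_const 2).aestronglyMeasurable 1
          (ae_of_all _ fun ω => by
            rw [Real.norm_eq_abs, abs_pow]; exact pow_le_one₀ (abs_nonneg _) (cdf_sub_abs _ _ _))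
        dsimp only
        rw [← ofReal_integral_eq_lintegral_ofReal i2 (ae_of_all _ fun _ => sq_nonneg _)]
        apply ENNReal.ofReal_le_ofReal
        rw [cdfb, cdfb, ← integral_sub (iy κ₁ y) (iy κ₂ y)]
        exact sq_integral_le' p _ ((my κ₁ y).sub (my κ₂ y)) (fun ω => cdf_sub_abs _ _ _)
    _ = ∫⁻ ω, (∫⁻ y, ENNReal.ofReal ((cdfFn (κ₁ ω) y - cdfFn (κ₂ ω) y)^2)) ∂p :=
        lintegral_lintegral_swap ((mu.pow_const 2).ennreal_ofReal.aemeasurable)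
    _ ≤ ∫⁻ ω, B ∂p := by
        apply lintegral_mono_ae
        filter_upwards [hB, e₁, e₂] with ω h a b
        rwa [← a, ← b]
    _ = B := by simp

lemma cdf_map (γ r : ℝ) (hγ : 0 < γ) (ν : Measure ℝ) (y : ℝ) :
    cdfFn (ν.map (fun t => r + γ * t)) y = cdfFn ν (γ⁻¹ * (y - r)) := by
  unfold cdfFn
  rw [Measure.map_apply (by fun_prop) measurableSet_Iic]
  congr 2
  ext t
  simp only [Set.mem_preimage, Set.mem_Iic]
  rw [← div_eq_inv_mul, le_div_iff₀ hγ]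
  constructor <;> intro h <;> linarith

lemma cdf_map_zero (r : ℝ) (ν : Measure ℝ) [IsProbabilityMeasure ν] (y : ℝ) :
    cdfFn (ν.map (fun t => r + 0 * t)) y = if r ≤ y then 1 else 0 := by
  unfold cdfFn
  rw [Measure.map_apply (by fun_prop) measurableSet_Iic]
  by_cases h : r ≤ y <;> simp [Set.preimage, h]

lemma cdf_mix {A : Type} [Fintype A] (w : A → ENNReal) (hw : ∀ a, w a ≠ ⊤) (ν : A → Measure ℝ)
    (hν : ∀ a, IsProbabilityMeasure (ν a)) (y : ℝ) :
    cdfFn (∑ a, w a • ν a) y = ∑ a, (w a).toReal * cdfFn (ν a) y := by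
  unfold cdfFn
  rw [Measure.finsetSum_apply, ENNReal.toReal_sum]
  · simp
  · intro a _
    simpa using ENNReal.mul_ne_top (hw a) (measure_ne_top (ν a) _)

lemma pointwise_contr {A : Type} [Fintype A] (w : A → ENNReal) (hw : ∑ a, w a = 1) (γ r : ℝ) (hγ : 0 ≤ γ)
    (μ ν : A → Measure ℝ) (hμ : ∀ a, IsProbabilityMeasure (μ a)) (hν : ∀ a, IsProbabilityMeasure (ν a))
    (D : ℝ) (hi : ∀ a, Integrable (fun x => (cdfFn (μ a) x - cdfFn (ν a) x)^2))
    (hD : ∀ a, ∫ x, (cdfFn (μ a) x - cdfFn (ν a) x)^2 ≤ D) :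
    ∫⁻ y, ENNReal.ofReal ((cdfFn (∑ a, w a • (μ a).map (fun t => r + γ * t)) y
      - cdfFn (∑ a, w a • (ν a).map (fun t => r + γ * t)) y)^2) ≤ ENNReal.ofReal (γ * D) := by
  have hwt : ∀ a, w a ≠ ⊤ := by
    intro a h
    have : w a ≤ 1 := hw ▸ Finset.single_le_sum (f := w) (fun _ _ => zero_le) (Finset.mem_univ a)
    simp [h] at this
  have hwr : ∑ a, (w a).toReal = 1 := by
    rw [← ENNReal.toReal_sum (fun a _ => hwt a), hw]; simp
  have mm : Measurable (fun t : ℝ => r + γ * t) := by fun_prop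
  have pμ : ∀ a, IsProbabilityMeasure ((μ a).map (fun t => r + γ * t)) := fun a => Measure.isProbabilityMeasure_map mm.aemeasurable
  have pν : ∀ a, IsProbabilityMeasure ((ν a).map (fun t => r + γ * t)) := fun a => Measure.isProbabilityMeasure_map mm.aemeasurable
  simp only [cdf_mix w hwt _ pμ, cdf_mix w hwt _ pν]
  rcases hγ.eq_or_lt with h | h
  · subst h
    simp
  · simp only [cdf_map γ r h]
    set Δ : A → ℝ → ℝ := fun a x => (cdfFn (μ a) x - cdfFn (ν a) x)^2 with hΔ
    have i' : ∀ a, Integrable (fun y => Δ a (γ⁻¹ * (y - r))) := fun a =>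
      ((hi a).comp_mul_left' (inv_ne_zero h.ne')).comp_sub_right r
    have iS : Integrable (fun y => ∑ a, (w a).toReal * Δ a (γ⁻¹ * (y - r))) :=
      integrable_finsetSum _ (fun a _ => (i' a).const_mul _)
    have v : ∀ a, ∫ y, Δ a (γ⁻¹ * (y - r)) = γ * ∫ x, Δ a x := by
      intro a
      rw [integral_sub_right_eq_self (fun y => Δ a (γ⁻¹ * y)) r, Measure.integral_comp_mul_left]
      simp [abs_of_pos h]
    calc _ ≤ ∫⁻ y, ENNReal.ofReal (∑ a, (w a).toReal * Δ a (γ⁻¹ * (y - r))) := by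
          apply lintegral_mono
          intro y
          apply ENNReal.ofReal_le_ofReal
          rw [← Finset.sum_sub_distrib]
          simp only [← mul_sub]
          exact Real.pow_arith_mean_le_arith_mean_pow_of_even Finset.univ (fun a => (w a).toReal) _ (fun _ _ => ENNReal.toReal_nonneg) hwr (by decide)
      _ = ENNReal.ofReal (∫ y, ∑ a, (w a).toReal * Δ a (γ⁻¹ * (y - r))) :=
          (ofReal_integral_eq_lintegral_ofReal iS (ae_of_all _ fun y => Finset.sum_nonneg fun a _ => mul_nonneg ENNReal.toReal_nonneg (sq_nonneg _))).symm
      _ ≤ _ := by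
          apply ENNReal.ofReal_le_ofReal
          rw [integral_finsetSum _ (fun a _ => (i' a).const_mul _)]
          simp only [integral_const_mul, v]
          calc _ ≤ ∑ a, (w a).toReal * (γ * D) := Finset.sum_le_sum fun a _ =>
                mul_le_mul_of_nonneg_left (mul_le_mul_of_nonneg_left (hD a) h.le) ENNReal.toReal_nonneg
            _ = _ := by rw [← Finset.sum_mul, hwr, one_mul]
lemma cdf_below (ν : Measure ℝ) (a b : ℝ) (h : ν (Set.Icc a b)ᶜ = 0) (x : ℝ) (hx : x < a) :
    cdfFn ν x = 0 := by
  have : ν (Set.Iic x) = 0 := by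
    refine measure_mono_null ?_ h
    intro y hy hy'
    exact absurd (hy'.1.trans hy) (not_le.2 hx)
  simp [cdfFn, this]

lemma cdf_above (ν : Measure ℝ) [IsProbabilityMeasure ν] (a b : ℝ) (h : ν (Set.Icc a b)ᶜ = 0) (x : ℝ)
    (hx : b ≤ x) : cdfFn ν x = 1 := by
  have : ν (Set.Iic x)ᶜ = 0 := by
    refine measure_mono_null ?_ h
    intro y hy hy'
    exact hy (hy'.2.trans hx)
  have := (prob_compl_eq_zero_iff measurableSet_Iic).1 this
  simp [cdfFn, this]

lemma bellman_prop {X A : Type} [Fintype X] [Fintype A]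
    [MeasurableSpace X] [MeasurableSpace A]
    (γ : ℝ) (hγ0 : 0 ≤ γ)
    (p : X × A → Measure (ℝ × X)) (hp : ∀ xa, IsProbabilityMeasure (p xa))
    (pol : X → Measure A) (hpol : ∀ x, IsProbabilityMeasure (pol x))
    (ηC : X × A → Measure ℝ) (hC : ∀ xa, IsProbabilityMeasure (ηC xa))
    (ηπ : X × A → Measure ℝ) (hπ : ∀ xa, IsProbabilityMeasure (ηπ xa))
    (hfix : ∀ xa, bellmanOp γ p pol ηπ xa = ηπ xa)
    (xa : X × A) (hne : bellmanOp γ p pol ηC xa ≠ 0) (D : ℝ)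
    (hi : ∀ xa, Integrable (fun x => (cdfFn (ηC xa) x - cdfFn (ηπ xa) x)^2))
    (hD : ∀ xa, ∫ x, (cdfFn (ηC xa) x - cdfFn (ηπ xa) x)^2 ≤ D) :
    IsProbabilityMeasure (bellmanOp γ p pol ηC xa) ∧
    ∫⁻ y, ENNReal.ofReal ((cdfFn (bellmanOp γ p pol ηC xa) y - cdfFn (ηπ xa) y)^2) ≤ ENNReal.ofReal (γ * D) := by
  have key : ∀ η : X × A → Measure ℝ, bellmanOp γ p pol η xa ≠ 0 → AEMeasurable (fun rx' : ℝ × X => ∑ a' : A, (pol rx'.2 {a'}) • (η (rx'.2, a')).map (fun t => rx'.1 + γ * t)) (p xa) := by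
    intro η h
    by_contra h'
    apply h
    unfold bellmanOp Measure.bind
    rw [Measure.map_of_not_aemeasurable h', Measure.join_zero]
  have mass : ∀ η : X × A → Measure ℝ, (∀ xa, IsProbabilityMeasure (η xa)) → ∀ rx' : ℝ × X, (∑ a' : A, (pol rx'.2 {a'}) • (η (rx'.2, a')).map (fun t => rx'.1 + γ * t)) Set.univ = ∑ a' : A, pol rx'.2 {a'} := by
    intro η hη rx'
    rw [Measure.finsetSum_apply]
    apply Finset.sum_congr rfl
    intro a _
    rw [Measure.smul_apply, Measure.map_apply (by fun_prop) MeasurableSet.univ]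
    simp
  have mπ := key ηπ (by rw [hfix]; exact IsProbabilityMeasure.ne_zero _)
  have mC := key ηC hne
  have hge : ∀ x, 1 ≤ ∑ a' : A, pol x {a'} := by
    intro x
    rw [← measure_univ (μ := pol x)]
    have : (Set.univ : Set A) = ⋃ a ∈ (Finset.univ : Finset A), {a} := by ext; simp
    rw [this]
    exact measure_biUnion_finset_le _ _
  have hW : ∀ᵐ ω ∂(p xa), ∑ a' : A, pol ω.2 {a'} = 1 := by
    have h1 := Measure.bind_apply MeasurableSet.univ mπ
    have h2 := hfix xa
    unfold bellmanOp at h2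
    rw [h2] at h1
    simp only [mass ηπ hπ, measure_univ] at h1
    have am : AEMeasurable (fun ω : ℝ × X => ∑ a' : A, pol ω.2 {a'}) (p xa) := by
      have := (Measure.measurable_coe MeasurableSet.univ).comp_aemeasurable mπ
      refine this.congr (ae_of_all _ fun ω => mass ηπ hπ ω)
    have := ae_eq_of_ae_le_of_lintegral_le (μ := p xa) (f := fun _ => 1) (g := fun ω : ℝ × X => ∑ a' : A, pol ω.2 {a'})
      (ae_of_all _ fun ω => hge ω.2) (by simp) am (by rw [← h1]; simp)
    filter_upwards [this] with ω h using h.symm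
  have uC := hW.mono fun ω h => (mass ηC hC ω).trans h
  have uπ := hW.mono fun ω h => (mass ηπ hπ ω).trans h
  constructor
  · constructor
    unfold bellmanOp
    rw [Measure.bind_apply MeasurableSet.univ mC, lintegral_congr_ae uC]
    simp
  · have := contraction (p xa) _ _ mC mπ uC uπ (ENNReal.ofReal (γ * D)) (by
      filter_upwards [hW] with ω h
      exact pointwise_contr (fun a => pol ω.2 {a}) h γ ω.1 hγ0 (fun a => ηC (ω.2, a)) (fun a => ηπ (ω.2, a))
        (fun a => hC _) (fun a => hπ _) D (fun a => hi _) (fun a => hD _))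
    have h2 := hfix xa
    unfold bellmanOp at h2 ⊢
    rwa [h2] at this

/-- Approximation error bound for the fixed point of the projected
Bellman operator, when the true return distributions are supported on [z₁, z_K]. -/
theorem cramerDist_fixedPoint_bound
    {X A : Type} [Fintype X] [Fintype A] [Nonempty X] [Nonempty A]
    [MeasurableSpace X] [MeasurableSpace A]
    (γ : ℝ) (hγ0 : 0 ≤ γ) (hγ1 : γ < 1)
    (p : X × A → Measure (ℝ × X)) (hp : ∀ xa, IsProbabilityMeasure (p xa))
    (pol : X → Measure A) (hpol : ∀ x, IsProbabilityMeasure (pol x))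
    (K : ℕ) (hK : 2 ≤ K) (z : ℕ → ℝ) (hz : ∀ i, i + 1 < K → z i < z (i + 1))
    -- η_C : the unique fixed point of Π_C T^π, supported on the grid
    (ηC : X × A → Measure ℝ) (hηCprob : ∀ xa, IsProbabilityMeasure (ηC xa))
    (hηCsupp : ∀ xa, ηC xa {w | ∃ i < K, w = z i}ᶜ = 0)
    (hηCfix : ∀ xa, cramerProj K z (bellmanOp γ p pol ηC xa) = ηC xa)
    -- η_π : the true return distribution function, a fixed point of T^π
    (ηπ : X × A → Measure ℝ) (hηπprob : ∀ xa, IsProbabilityMeasure (ηπ xa))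
    (hηπfix : ∀ xa, bellmanOp γ p pol ηπ xa = ηπ xa)
    (hηπsupp : ∀ xa, ηπ xa (Set.Icc (z 0) (z (K - 1)))ᶜ = 0) :
    (supCramer ηC ηπ) ^ 2 ≤ (1 / (1 - γ)) * ⨆ i : Fin (K - 1), (z (i.1 + 1) - z i.1) := by
  have hCs : ∀ xa, ηC xa (Set.Icc (z 0) (z (K - 1)))ᶜ = 0 := by
    intro xa
    refine measure_mono_null ?_ (hηCsupp xa)
    apply Set.compl_subset_compl.2
    rintro w ⟨i, hi, rfl⟩
    exact ⟨grid_mono K z hz 0 i (by omega) hi, grid_mono K z hz i (K-1) (by omega) (by omega)⟩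
  have hzK : z 0 ≤ z (K-1) := grid_mono K z hz 0 (K-1) (by omega) (by omega)
  set g := ⨆ i : Fin (K - 1), (z (i.1 + 1) - z i.1) with hg
  have hgi : ∀ i, i + 1 < K → z (i+1) - z i ≤ g := fun i hi =>
    le_ciSup (f := fun i : Fin (K - 1) => z (i.1 + 1) - z i.1) (Set.finite_range _).bddAbove ⟨i, by omega⟩
  -- square difference
  have sqb : ∀ (μ ν : Measure ℝ) [IsProbabilityMeasure μ] [IsProbabilityMeasure ν] (x : ℝ), ‖(cdfFn μ x - cdfFn ν x)^2‖ ≤ 1 := by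
    intro μ ν _ _ x
    rw [Real.norm_eq_abs, abs_pow]; exact pow_le_one₀ (abs_nonneg _) (cdf_sub_abs _ _ _)
  have sqm : ∀ (μ ν : Measure ℝ) [IsProbabilityMeasure μ] [IsProbabilityMeasure ν], Measurable (fun x => (cdfFn μ x - cdfFn ν x)^2) := by
    intro μ ν _ _
    exact ((cdfFn_mono μ).measurable.sub (cdfFn_mono ν).measurable).pow_const 2
  have sqi : ∀ (μ ν : Measure ℝ) [IsProbabilityMeasure μ] [IsProbabilityMeasure ν] (a b : ℝ), IntegrableOn (fun x => (cdfFn μ x - cdfFn ν x)^2) (Set.Ioc a b) := by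
    intro μ ν _ _ a b
    exact Measure.integrableOn_of_bounded (M := 1) (by simp) (sqm μ ν).aestronglyMeasurable (ae_of_all _ (sqb μ ν))
  have zeroOut : ∀ xa x, x ∉ Set.Ico (z 0) (z (K-1)) → (cdfFn (ηC xa) x - cdfFn (ηπ xa) x)^2 = 0 := by
    intro xa x hx
    have := hηCprob xa
    have := hηπprob xa
    by_cases h : x < z 0
    · rw [cdf_below _ _ _ (hCs xa) x h, cdf_below _ _ _ (hηπsupp xa) x h]; simp
    · have h' : z (K-1) ≤ x := by
        by_contra h'
        exact hx ⟨not_lt.1 h, not_le.1 h'⟩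
      rw [cdf_above _ _ _ (hCs xa) x h', cdf_above _ _ _ (hηπsupp xa) x h']; simp
  have hI : ∀ xa, Integrable (fun x => (cdfFn (ηC xa) x - cdfFn (ηπ xa) x)^2) := by
    intro xa
    have := hηCprob xa
    have := hηπprob xa
    rw [← integrableOn_iff_integrable_of_support_subset (s := Set.Ico (z 0) (z (K-1)))]
    · exact ((integrableOn_Icc_iff_integrableOn_Ioc (by simp)).2 (sqi _ _ _ _)).mono_set Set.Ico_subset_Icc_self
    · intro x hx
      by_contra h
      exact hx (zeroOut xa x h)
  have hIeq : ∀ xa, ∫ x, (cdfFn (ηC xa) x - cdfFn (ηπ xa) x)^2 = ∫ x in (z 0)..(z (K-1)), (cdfFn (ηC xa) x - cdfFn (ηπ xa) x)^2 := by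
    intro xa
    rw [intervalIntegral.integral_of_le hzK, ← integral_Ico_eq_integral_Ioc,
      setIntegral_eq_integral_of_forall_compl_eq_zero (zeroOut xa)]
  set I : X × A → ℝ := fun xa => ∫ x, (cdfFn (ηC xa) x - cdfFn (ηπ xa) x)^2 with hIdef
  have I0 : ∀ xa, 0 ≤ I xa := fun xa => integral_nonneg (fun _ => sq_nonneg _)
  have main : ∀ D, (∀ xa, I xa ≤ D) → ∀ xa, I xa ≤ γ * D + g := by
    intro D hD xa
    have pC := hηCprob xa
    have pπ := hηπprob xa
    have hD0 : 0 ≤ D := (I0 xa).trans (hD xa)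
    have hne : bellmanOp γ p pol ηC xa ≠ 0 := by
      intro h
      have h2 := hηCfix xa
      rw [h] at h2
      apply IsProbabilityMeasure.ne_zero (ηC xa)
      rw [← h2]
      simp [cramerProj]
    obtain ⟨pB, hB⟩ := bellman_prop γ hγ0 p hp pol hpol ηC hηCprob ηπ hηπprob hηπfix xa hne D hI hD
    set ν := bellmanOp γ p pol ηC xa with hν
    have cell : ∀ i, i + 1 < K → ∫ x in (z i)..(z (i+1)), (cdfFn (ηC xa) x - cdfFn (ηπ xa) x)^2
        ≤ (∫ x in (z i)..(z (i+1)), (cdfFn ν x - cdfFn (ηπ xa) x)^2) + g * (cdfFn (ηπ xa) (z (i+1)) - cdfFn (ηπ xa) (z i)) := by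
      intro i hi
      have hzi := hz i hi
      have hc : ∫ x in (z i)..(z (i+1)), (cdfFn (ηC xa) x - cdfFn (ηπ xa) x)^2 =
          ∫ x in (z i)..(z (i+1)), (cdfFn (ηC xa) (z i) - cdfFn (ηπ xa) x)^2 := by
        apply intervalIntegral.integral_congr_Ioo_of_le hzi.le
        intro x hx
        have e1 := cdf_proj K z hz ν i hi x hx.1.le hx.2
        have e2 := cdf_proj K z hz ν i hi (z i) le_rfl hzi
        rw [hηCfix] at e1 e2
        have := mul_left_cancel₀ (by linarith : z (i+1) - z i ≠ 0) (e1.trans e2.symm)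
        simp only [this]
      rw [hc]
      refine (cell_bound (z i) (z (i+1)) hzi _ (cdfFn ν) (cdfFn_mono _) (cdfFn_mono _) _ ?_).trans ?_
      · have e2 := cdf_proj K z hz ν i hi (z i) le_rfl hzi
        rwa [hηCfix] at e2
      · have d0 : 0 ≤ cdfFn (ηπ xa) (z (i+1)) - cdfFn (ηπ xa) (z i) := sub_nonneg.2 (cdfFn_mono _ hzi.le)
        have d1 := (abs_le.1 (le_refl |cdfFn (ηπ xa) (z (i+1)) - cdfFn (ηπ xa) (z i)|)).2
        have d2 : cdfFn (ηπ xa) (z (i+1)) - cdfFn (ηπ xa) (z i) ≤ 1 := by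
          linarith [cdfFn_le_one (ηπ xa) (z (i+1)), cdfFn_nonneg (ηπ xa) (z i)]
        gcongr
        · linarith [hgi i hi]
        · exact hgi i hi
        · nlinarith
    have ii : ∀ (μ : Measure ℝ) [IsProbabilityMeasure μ], ∀ k < K - 1, IntervalIntegrable (fun x => (cdfFn μ x - cdfFn (ηπ xa) x)^2) volume (z k) (z (k+1)) := by
      intro μ _ k hk
      rw [intervalIntegrable_iff_integrableOn_Ioc_of_le (hz k (by omega)).le]
      exact sqi _ _ _ _
    have s1 := intervalIntegral.sum_integral_adjacent_intervals (ii (ηC xa))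
    have s2 := intervalIntegral.sum_integral_adjacent_intervals (ii ν)
    have s3 := Finset.sum_le_sum (s := Finset.range (K-1)) (fun i hi => cell i (by simp at hi; omega))
    rw [Finset.sum_add_distrib, s1, s2, ← Finset.mul_sum, Finset.sum_range_sub (fun i => cdfFn (ηπ xa) (z i)), ← hIeq] at s3
    have g0 : 0 ≤ g := by linarith [hgi 0 (by omega), hz 0 (by omega)]
    have t : cdfFn (ηπ xa) (z (K-1)) - cdfFn (ηπ xa) (z 0) ≤ 1 := by
      linarith [cdfFn_le_one (ηπ xa) (z (K-1)), cdfFn_nonneg (ηπ xa) (z 0)]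
    have q : ∫ x in (z 0)..(z (K-1)), (cdfFn ν x - cdfFn (ηπ xa) x)^2 ≤ γ * D := by
      rw [intervalIntegral.integral_of_le hzK, integral_eq_lintegral_of_nonneg_ae (ae_of_all _ fun _ => sq_nonneg _) (sqm _ _).aestronglyMeasurable]
      refine ENNReal.toReal_le_of_le_ofReal (mul_nonneg hγ0 hD0) ?_
      exact (setLIntegral_le_lintegral _ _).trans hB
    have := mul_le_mul_of_nonneg_left t g0
    change I xa ≤ _ at s3
    linarith
  obtain ⟨x0, hx0⟩ := exists_eq_ciSup_of_finite (f := fun xa : X × A => cramerDist (ηC xa) (ηπ xa))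
  have hsup : supCramer ηC ηπ = Real.sqrt (I x0) := hx0.symm
  have hmax : ∀ xa, I xa ≤ I x0 := by
    intro xa
    have : Real.sqrt (I xa) ≤ Real.sqrt (I x0) := by
      rw [← hsup]
      exact le_ciSup (f := fun xa : X × A => cramerDist (ηC xa) (ηπ xa)) (Set.finite_range _).bddAbove xa
    exact (Real.sqrt_le_sqrt_iff (I0 x0)).1 this
  rw [hsup, Real.sq_sqrt (I0 x0), one_div, ← div_eq_inv_mul, le_div_iff₀ (by linarith)]
  have := main _ hmax x0
  linarith

end
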